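/- Let P ⊂ ℝ^n be a compact polytope with nonempty interior given by a non-redundant description with pairwise distinct primitive normal vectors v_1, …, v_m ∈ ℤ^n spanning ℝ^n, and let u be a point of the interior of P. Then the following are equivalent: (i) for every nonzero lattice vector w ∈ ℤ^n, u belongs to Trop(P, w); (ii) for every primitive lattice vector w ∈ ℤ^n that is orthogonal to some primary subspace for P, u belongs to Trop(P, w). -/

import Mathlib

open scoped Classical

noncomputable section

/-- Integer inner product `⟨w, v⟩ = ∑ i, w i * v i` on `ℤ^n`. -/
def zdot {n : ℕ} (w v : Fin n → ℤ) : ℤ := ∑ i, w i * v i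

/-- A lattice vector is primitive if the gcd of its entries is `1`. -/
def Primitive {n : ℕ} (w : Fin n → ℤ) : Prop := Finset.univ.gcd w = 1

/-- The affine function `l_j(u) = ⟨u, v_j⟩ - λ_j`. -/
def lf {n m : ℕ} (v : Fin m → Fin n → ℤ) (lam : Fin m → ℝ) (j : Fin m) (u : Fin n → ℝ) : ℝ :=
  (∑ i, u i * (v j i : ℝ)) - lam j

/-- The polytope `P = {u : l_j(u) ≥ 0 for all j}`. -/
def Pset {n m : ℕ} (v : Fin m → Fin n → ℤ) (lam : Fin m → ℝ) : Set (Fin n → ℝ) :=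
  {u | ∀ j, 0 ≤ lf v lam j u}

/-- The tropicalization of `P` relative to the lattice vector `w`: the set of points at which
the minimum of `{l_j(u) : ⟨w, v_j⟩ ≠ 0}` is attained by at least two distinct indices. -/
def TropRel {n m : ℕ} (v : Fin m → Fin n → ℤ) (lam : Fin m → ℝ) (w : Fin n → ℤ) :
    Set (Fin n → ℝ) :=
  {u | ∃ j₁ j₂ : Fin m, j₁ ≠ j₂ ∧ zdot w (v j₁) ≠ 0 ∧ zdot w (v j₂) ≠ 0 ∧
        lf v lam j₁ u = lf v lam j₂ u ∧
        ∀ j : Fin m, zdot w (v j) ≠ 0 → lf v lam j₁ u ≤ lf v lam j u}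

/-- A primary subspace for `P`: an `(n-1)`-dimensional subspace of `ℝ^n` spanned by a subset
of the facet normal vectors `v_j`. -/
def IsPrimary {n m : ℕ} (v : Fin m → Fin n → ℤ) (V : Submodule ℝ (Fin n → ℝ)) : Prop :=
  Module.finrank ℝ ↥V = n - 1 ∧
  ∃ S : Set (Fin m), V = Submodule.span ℝ ((fun j => fun i => ((v j i : ℝ))) '' S)

/-- `w` is orthogonal to some primary subspace for `P`. -/
def OrthToPrimary {n m : ℕ} (v : Fin m → Fin n → ℤ) (w : Fin n → ℤ) : Prop :=
  ∃ V : Submodule ℝ (Fin n → ℝ), IsPrimary v V ∧ ∀ x ∈ V, (∑ i, (w i : ℝ) * x i) = 0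

theorem cast_zdot_real {n : ℕ} (w x : Fin n → ℤ) :
    ((zdot w x : ℤ) : ℝ) = ∑ i, (w i : ℝ) * (x i : ℝ) := by
  simp [zdot]

/-- Rational separation, with cleared denominators. -/
theorem int_sep {n m : ℕ} (v : Fin m → Fin n → ℤ) (T : Set (Fin m)) (x : Fin n → ℤ)
    (hx : (fun i => (x i : ℝ)) ∉
      Submodule.span ℝ ((fun j => fun i => ((v j i : ℝ))) '' T)) :
    ∃ g : Fin n → ℤ, (∀ j ∈ T, zdot g (v j) = 0) ∧ zdot g x ≠ 0 := by
  have hq : (fun i => (x i : ℚ)) ∉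
      Submodule.span ℚ ((fun j => fun i => ((v j i : ℚ))) '' T) := by
    intro h
    apply hx
    have key : ∀ y ∈ Submodule.span ℚ ((fun j => fun i => ((v j i : ℚ))) '' T),
        (fun i => ((y i : ℚ) : ℝ)) ∈
          Submodule.span ℝ ((fun j => fun i => ((v j i : ℝ))) '' T) := by
      intro y hy
      induction hy using Submodule.span_induction with
      | mem y hy =>
        obtain ⟨j, hj, rfl⟩ := hy
        apply Submodule.subset_span
        exact ⟨j, hj, by ext i; simp⟩
      | zero => 
        convert Submodule.zero_mem _ using 1
        ext i; simp
      | add a b _ _ ha hb =>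
        convert Submodule.add_mem _ ha hb using 1
        ext i; simp
      | smul c a _ ha =>
        convert Submodule.smul_mem _ (c : ℝ) ha using 1
        ext i; simp
    have := key _ h
    simpa using this
  obtain ⟨f, hf, hle⟩ := Submodule.exists_le_ker_of_notMem hq
  obtain ⟨b, hb⟩ := IsLocalization.exist_integer_multiples_of_finite (nonZeroDivisors ℤ)
    (fun i : Fin n => f (Pi.single i 1))
  choose g hg using hb
  have hb0 : ((b : ℤ) : ℚ) ≠ 0 := by
    exact_mod_cast nonZeroDivisors.ne_zero b.2
  have hfy : ∀ y : Fin n → ℤ, ((zdot g y : ℤ) : ℚ) = (b : ℤ) * f (fun i => (y i : ℚ)) := by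
    intro y
    rw [LinearMap.pi_apply_eq_sum_univ f, Finset.mul_sum]
    simp only [zdot, Int.cast_sum, Int.cast_mul]
    apply Finset.sum_congr rfl
    intro i _
    have h1 := hg i
    simp at h1
    have h2 : (fun j => if i = j then (1 : ℚ) else 0) = Pi.single i 1 := by
      ext j; simp [Pi.single_apply, eq_comm]
    rw [h1, h2, smul_eq_mul]
    first | ring | (simp; ring)
  refine ⟨g, ?_, ?_⟩
  · intro j hj
    have : f (fun i => (v j i : ℚ)) = 0 := hle (Submodule.subset_span ⟨j, hj, rfl⟩)
    have h2 := hfy (v j)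
    rw [this, mul_zero] at h2
    exact_mod_cast h2
  · intro h
    have h2 := hfy x
    rw [h] at h2
    simp only [Int.cast_zero] at h2
    exact (mul_ne_zero hb0 hf) h2.symm

theorem zdot_smul_left {n : ℕ} (c : ℤ) (w x : Fin n → ℤ) :
    zdot (fun i => c * w i) x = c * zdot w x := by
  simp [zdot, Finset.mul_sum, mul_assoc]

theorem zdot_comb {n : ℕ} (c d : ℤ) (w g x : Fin n → ℤ) :
    zdot (fun i => c * g i - d * w i) x = c * zdot g x - d * zdot w x := by
  simp [zdot, Finset.mul_sum, sub_mul, mul_assoc]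

theorem exists_good {n m : ℕ} (v : Fin m → Fin n → ℤ)
    (hspan : Submodule.span ℝ (Set.range fun j => fun i => ((v j i : ℝ)))
      = (⊤ : Submodule ℝ (Fin n → ℝ)))
    (w : Fin n → ℤ) (a : Fin m) (ha : zdot w (v a) ≠ 0) :
    ∃ w' : Fin n → ℤ, Primitive w' ∧ OrthToPrimary v w' ∧ zdot w' (v a) ≠ 0 ∧
      ∀ j, zdot w (v j) = 0 → zdot w' (v j) = 0 := by
  let Q : ℕ → Prop := fun k => ∃ w' : Fin n → ℤ, zdot w' (v a) ≠ 0 ∧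
    (∀ j, zdot w (v j) = 0 → zdot w' (v j) = 0) ∧
    (Finset.univ.filter fun j => zdot w' (v j) = 0).card = k
  have hQ : ∃ k, Q k := ⟨_, w, ha, fun _ h => h, rfl⟩
  have hbd : ∀ k, Q k → k ≤ m := by
    rintro k ⟨w', _, _, rfl⟩
    exact (Finset.card_le_univ _).trans (by simp)
  obtain ⟨k0, hk0⟩ := hQ
  obtain ⟨w1, h1a, h1S, h1c⟩ : Q (Nat.findGreatest Q m) :=
    Nat.findGreatest_spec (hbd k0 hk0) hk0
  have hmax : ∀ w' : Fin n → ℤ, zdot w' (v a) ≠ 0 →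
      (∀ j, zdot w1 (v j) = 0 → zdot w' (v j) = 0) →
      ∀ j, zdot w' (v j) = 0 → zdot w1 (v j) = 0 := by
    intro w' hw'a hw' j hj
    have hQ' : Q (Finset.univ.filter fun j => zdot w' (v j) = 0).card :=
      ⟨w', hw'a, fun j h => hw' j (h1S j h), rfl⟩
    have hle := Nat.le_findGreatest (hbd _ hQ') hQ'
    rw [← h1c] at hle
    have hsub : (Finset.univ.filter fun j => zdot w1 (v j) = 0) ⊆
        (Finset.univ.filter fun j => zdot w' (v j) = 0) := by
      intro j; simpa using hw' j
    have heq := Finset.eq_of_subset_of_card_le hsub hle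
    have : j ∈ (Finset.univ.filter fun j => zdot w1 (v j) = 0) := by
      rw [heq]; simpa using hj
    simpa using this
  -- divide by the gcd
  have hne : (Finset.univ : Finset (Fin n)).Nonempty := by
    by_contra h
    rw [Finset.not_nonempty_iff_eq_empty] at h
    exact h1a (by simp [zdot, h])
  obtain ⟨w', hw', hgcd⟩ := Finset.extract_gcd w1 hne
  have hw1 : w1 = fun i => (Finset.univ.gcd w1) * w' i := by
    ext i; exact hw' i (Finset.mem_univ i)
  have hz : ∀ x, zdot w1 x = Finset.univ.gcd w1 * zdot w' x := by
    intro x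
    conv_lhs => rw [hw1]
    exact zdot_smul_left _ _ _
  have hg0 : Finset.univ.gcd w1 ≠ 0 := by
    intro h
    exact h1a (by rw [hz, h, zero_mul])
  have hz0 : ∀ x, zdot w1 x = 0 ↔ zdot w' x = 0 := by
    intro x; rw [hz]; simp [hg0]
  have hspan' : ∀ j, (fun i => (v j i : ℝ)) ∈ Submodule.span ℝ
      ((fun j => fun i => ((v j i : ℝ))) '' (insert a {j | zdot w' (v j) = 0})) := by
    intro j
    by_contra hj
    obtain ⟨g, hg, hgj⟩ := int_sep v _ _ hj
    have hga := hg a (Set.mem_insert _ _)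
    have hjn : zdot w1 (v j) ≠ 0 := by
      intro h
      exact hj (Submodule.subset_span ⟨j, Or.inr ((hz0 _).1 h), rfl⟩)
    apply hjn
    apply hmax (fun i => zdot w1 (v j) * g i - zdot g (v j) * w1 i)
    · rw [zdot_comb, hga]
      simp [hgj, h1a]
    · intro k hk
      rw [zdot_comb, hk, hg k (Or.inr ((hz0 _).1 hk))]
      simp
    · rw [zdot_comb]; ring
  let φ : (Fin n → ℝ) →ₗ[ℝ] ℝ := ∑ i, (w' i : ℝ) • LinearMap.proj i
  have hφ : ∀ x, φ x = ∑ i, (w' i : ℝ) * x i := by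
    intro x; simp [φ]
  have hφv : ∀ j, φ (fun i => (v j i : ℝ)) = (zdot w' (v j) : ℤ) := by
    intro j; rw [hφ, cast_zdot_real]
  have h'a : zdot w' (v a) ≠ 0 := fun h => h1a ((hz0 _).2 h)
  have hφa : φ (fun i => (v a i : ℝ)) ≠ 0 := by
    rw [hφv]; exact_mod_cast h'a
  have hVle : Submodule.span ℝ ((fun j => fun i => ((v j i : ℝ))) '' {j | zdot w' (v j) = 0})
      ≤ LinearMap.ker φ := by
    rw [Submodule.span_le]
    rintro _ ⟨j, hj, rfl⟩
    have hj' : zdot w' (v j) = 0 := hj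
    change φ _ = 0
    rw [hφv, hj']; simp
  have hVeq : Submodule.span ℝ ((fun j => fun i => ((v j i : ℝ))) '' {j | zdot w' (v j) = 0})
      = LinearMap.ker φ := by
    apply le_antisymm hVle
    intro x hx
    have hxT : x ∈ Submodule.span ℝ
        ((fun j => fun i => ((v j i : ℝ))) '' (insert a {j | zdot w' (v j) = 0})) := by
      have : (⊤ : Submodule ℝ (Fin n → ℝ)) ≤ Submodule.span ℝ
        ((fun j => fun i => ((v j i : ℝ))) '' (insert a {j | zdot w' (v j) = 0})) := by
        rw [← hspan, Submodule.span_le]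
        rintro _ ⟨j, rfl⟩
        exact hspan' j
      exact this trivial
    rw [Set.image_insert_eq, Submodule.mem_span_insert] at hxT
    obtain ⟨c, z, hzm, rfl⟩ := hxT
    have hx' : φ _ = 0 := hx
    have hz' : φ z = 0 := hVle hzm
    rw [map_add, map_smul, hz', add_zero, smul_eq_mul] at hx'
    have hc : c = 0 := (mul_eq_zero.1 hx').resolve_right hφa
    rw [hc, zero_smul, zero_add]
    exact hzm
  refine ⟨w', hgcd, ⟨_, ⟨?_, {j | zdot w' (v j) = 0}, rfl⟩, ?_⟩, h'a, ?_⟩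
  · rw [hVeq]
    have hr := LinearMap.finrank_range_add_finrank_ker φ
    have hsurj : LinearMap.range φ = ⊤ := by
      apply LinearMap.range_eq_top.2
      apply LinearMap.surjective
      intro h
      exact hφa (by rw [h]; rfl)
    rw [hsurj, finrank_top] at hr
    simp at hr
    omega
  · intro x hx
    rw [← hφ]
    exact hVle hx
  · intro j hj
    exact (hz0 _).1 (h1S j hj)

/-- For a compact polytope `P ⊂ ℝ^n` with nonempty interior, given by a
non-redundant description with pairwise distinct primitive normal vectors spanning `ℝ^n`, and a
point `u` of the interior of `P`, the following are equivalent: (i) `u ∈ Trop(P, w)` for every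
nonzero lattice vector `w`; (ii) `u ∈ Trop(P, w)` for every primitive lattice vector `w`
orthogonal to some primary subspace for `P`. -/
theorem statement0 {n m : ℕ} (hn : 1 ≤ n) (hm : 1 ≤ m)
    (v : Fin m → Fin n → ℤ) (lam : Fin m → ℝ)
    (hdist : Function.Injective v)
    (hprim : ∀ j, Primitive (v j))
    (hspan : Submodule.span ℝ (Set.range fun j => fun i => ((v j i : ℝ)))
      = (⊤ : Submodule ℝ (Fin n → ℝ)))
    (hcpt : IsCompact (Pset v lam))
    (hint : (interior (Pset v lam)).Nonempty)
    (hnr : ∀ j, ∃ p ∈ Pset v lam, lf v lam j p = 0 ∧ ∀ k, k ≠ j → 0 < lf v lam k p)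
    (u : Fin n → ℝ) (hu : u ∈ interior (Pset v lam)) :
    (∀ w : Fin n → ℤ, w ≠ 0 → u ∈ TropRel v lam w) ↔
    (∀ w : Fin n → ℤ, Primitive w → OrthToPrimary v w → u ∈ TropRel v lam w) := by
  constructor
  · intro h w hw _
    apply h
    rintro rfl
    have h1 : Finset.univ.gcd (0 : Fin n → ℤ) = 1 := hw
    have h0 : Finset.univ.gcd (0 : Fin n → ℤ) = 0 := by
      rw [Finset.gcd_eq_zero_iff]; intros; rfl
    rw [h0] at h1
    exact absurd h1 (by norm_num)
  · intro h w hw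
    have hJ : (Finset.univ.filter fun j => zdot w (v j) ≠ 0).Nonempty := by
      by_contra hemp
      have hall : ∀ j, zdot w (v j) = 0 := by
        intro j
        by_contra hj
        exact hemp ⟨j, by simpa using hj⟩
      let φ : (Fin n → ℝ) →ₗ[ℝ] ℝ := ∑ i, (w i : ℝ) • LinearMap.proj i
      have hφ : ∀ x, φ x = ∑ i, (w i : ℝ) * x i := by
        intro x; simp [φ]
      have hle : (⊤ : Submodule ℝ (Fin n → ℝ)) ≤ LinearMap.ker φ := by
        rw [← hspan, Submodule.span_le]
        rintro _ ⟨j, rfl⟩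
        change φ _ = 0
        rw [hφ, ← cast_zdot_real, hall j]; simp
      apply hw
      ext i
      have hi : φ (Pi.single i 1) = 0 := hle trivial
      rw [hφ] at hi
      simpa [Pi.single_apply] using hi
    obtain ⟨a, haJ, hamin⟩ := Finset.exists_min_image _ (fun j => lf v lam j u) hJ
    have ha : zdot w (v a) ≠ 0 := by simpa using haJ
    have hmin : ∀ j, zdot w (v j) ≠ 0 → lf v lam a u ≤ lf v lam j u := by
      intro j hj
      exact hamin j (by simpa using hj)
    by_contra hnot
    have hlt : ∀ j, j ≠ a → zdot w (v j) ≠ 0 → lf v lam a u < lf v lam j u := by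
      intro j hja hj
      refine lt_of_le_of_ne (hmin j hj) ?_
      intro heq
      exact hnot ⟨a, j, hja.symm, ha, hj, heq, hmin⟩
    obtain ⟨w', hp, ho, h'a, hker⟩ := exists_good v hspan w a ha
    obtain ⟨j₁, j₂, hne, h1, h2, heq, hm'⟩ := h w' hp ho
    have hle := hm' a h'a
    have g1 : zdot w (v j₁) ≠ 0 := fun h => h1 (hker _ h)
    have g2 : zdot w (v j₂) ≠ 0 := fun h => h2 (hker _ h)
    by_cases e1 : j₁ = a
    · have e2 : j₂ ≠ a := fun e => hne (e1.trans e.symm)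
      have := hlt j₂ e2 g2
      linarith
    · have := hlt j₁ e1 g1
      linarith
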